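/- Let 0 ≤ r₁ ≤ x < r₂ be real numbers. Then the Abel transform of the indicator function of the annulus [r₁, r₂] evaluated at x, namely 2 ∫_{x}^{r₂} r / √(r² − x²) dr, equals 2√(r₂² − x²), and this number equals the one-dimensional Lebesgue measure of the chord set {z ∈ ℝ : r₁² ≤ z² + x² ≤ r₂²}. (This is the paper's claim that the discretized projection matrix coefficient, defined as the length of the intersection of a ray with an annulus, agrees with the exact Abel transform of the annulus's characteristic function, in the case where the ray offset lies inside the annulus.) -/

import Mathlib

open Real MeasureTheory intervalIntegral

section AbelKernel

variable {x a b r : ℝ}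

theorem hasDerivAt_sqrt_sq_sub_sq (h : |x| < |r|) :
    HasDerivAt (fun s ↦ √(s ^ 2 - x ^ 2)) (r / √(r ^ 2 - x ^ 2)) r := by
  have hpos : 0 < r ^ 2 - x ^ 2 := sub_pos.2 (sq_lt_sq.2 h)
  have hsq : HasDerivAt (fun s ↦ s ^ 2 - x ^ 2) (2 * r) r := by
    simpa using (hasDerivAt_pow 2 r).sub_const (x ^ 2)
  simpa only [mul_div_mul_left _ _ (two_ne_zero' ℝ)] using hsq.sqrt hpos.ne'

theorem hasDerivAt_sqrt_sq_sub_sq_of_mem_Ioo (ha : |x| ≤ a) (hb : |x| ≤ b)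
    (hr : r ∈ Set.Ioo (min a b) (max a b)) :
    HasDerivAt (fun s ↦ √(s ^ 2 - x ^ 2)) (r / √(r ^ 2 - x ^ 2)) r :=
  hasDerivAt_sqrt_sq_sub_sq (((le_min ha hb).trans_lt hr.1).trans_le (le_abs_self r))

/-- The integrand is unbounded near `r = |x|`; it is integrable there because it is the
nonnegative derivative of a function continuous up to that endpoint. -/
theorem intervalIntegrable_div_sqrt_sq_sub_sq (ha : |x| ≤ a) (hb : |x| ≤ b) :
    IntervalIntegrable (fun r ↦ r / √(r ^ 2 - x ^ 2)) volume a b := by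
  refine intervalIntegrable_deriv_of_nonneg (by fun_prop)
    (fun r hr ↦ hasDerivAt_sqrt_sq_sub_sq_of_mem_Ioo ha hb hr) fun r hr ↦ ?_
  have hr_nonneg : 0 ≤ r := (abs_nonneg x).trans ((le_min ha hb).trans hr.1.le)
  positivity

theorem integral_div_sqrt_sq_sub_sq (ha : |x| ≤ a) (hb : |x| ≤ b) :
    ∫ r in a..b, r / √(r ^ 2 - x ^ 2) = √(b ^ 2 - x ^ 2) - √(a ^ 2 - x ^ 2) :=
  integral_eq_sub_of_hasDeriv_right (f := fun s ↦ √(s ^ 2 - x ^ 2)) (by fun_prop)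
    (fun _ hr ↦ (hasDerivAt_sqrt_sq_sub_sq_of_mem_Ioo ha hb hr).hasDerivWithinAt)
    (intervalIntegrable_div_sqrt_sq_sub_sq ha hb)

end AbelKernel

section Chord

variable {x r₁ r₂ : ℝ}

theorem setOf_sq_add_sq_mem_Icc_eq_Icc (h₁ : r₁ ^ 2 ≤ x ^ 2) (h₂ : x ^ 2 ≤ r₂ ^ 2) :
    {z : ℝ | r₁ ^ 2 ≤ z ^ 2 + x ^ 2 ∧ z ^ 2 + x ^ 2 ≤ r₂ ^ 2} =
      Set.Icc (-√(r₂ ^ 2 - x ^ 2)) √(r₂ ^ 2 - x ^ 2) := by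
  ext z
  have inner_bound : r₁ ^ 2 ≤ z ^ 2 + x ^ 2 := h₁.trans (le_add_of_nonneg_left (sq_nonneg z))
  rw [Set.mem_ofPred_eq, and_iff_right inner_bound, ← le_sub_iff_add_le,
    Real.sq_le (sub_nonneg.2 h₂), Set.mem_Icc]

theorem volume_setOf_sq_add_sq_mem_Icc (h₁ : r₁ ^ 2 ≤ x ^ 2) (h₂ : x ^ 2 ≤ r₂ ^ 2) :
    volume {z : ℝ | r₁ ^ 2 ≤ z ^ 2 + x ^ 2 ∧ z ^ 2 + x ^ 2 ≤ r₂ ^ 2} =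
      ENNReal.ofReal (2 * √(r₂ ^ 2 - x ^ 2)) := by
  rw [setOf_sq_add_sq_mem_Icc_eq_Icc h₁ h₂, Real.volume_Icc, sub_neg_eq_add, ← two_mul]

end Chord

/-- The discretized projection matrix coefficient (the length of the intersection of a ray
at offset `x` from the symmetry axis with the annulus `[r₁, r₂]`) agrees with the exact
Abel transform of the annulus's characteristic function, in the case where the ray offset
lies inside the annulus. -/
theorem abel_annulus_eq_chord_length_inside (x r₁ r₂ : ℝ) (hr₁ : 0 ≤ r₁) (hr₁x : r₁ ≤ x)
    (hxr₂ : x < r₂) :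
    2 * ∫ r in x..r₂, r / Real.sqrt (r ^ 2 - x ^ 2) = 2 * Real.sqrt (r₂ ^ 2 - x ^ 2) ∧
      volume {z : ℝ | r₁ ^ 2 ≤ z ^ 2 + x ^ 2 ∧ z ^ 2 + x ^ 2 ≤ r₂ ^ 2} =
        ENNReal.ofReal (2 * Real.sqrt (r₂ ^ 2 - x ^ 2)) := by
  have hx : 0 ≤ x := hr₁.trans hr₁x
  have habs : |x| = x := abs_of_nonneg hx
  constructor
  · rw [integral_div_sqrt_sq_sub_sq habs.le (habs.le.trans hxr₂.le), sub_self, Real.sqrt_zero,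
      sub_zero]
  · exact volume_setOf_sq_add_sq_mem_Icc (pow_le_pow_left₀ hr₁ hr₁x 2)
      (pow_le_pow_left₀ hx hxr₂.le 2)
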